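/- Let n ≥ 0 and let 𝒦₁, 𝒦₂ be simplicial complexes over S all of whose faces have cardinality at most n+1. If 𝒦₁ ≠ 𝒦₂ then d(𝒦₁, 𝒦₂) ≥ 1/(n+1). In particular, the collection 𝒮ₙ of simplicial complexes of dimension at most n is a uniformly discrete subset for the distance d. -/

import Mathlib

open scoped BigOperators

/-- A simplicial complex over the vertex set `S`: a nonempty collection of
nonempty finite subsets of `S`, closed under taking nonempty subsets. -/
def IsSimplicialComplex {S : Type*} (K : Set (Finset S)) : Prop :=
  K.Nonempty ∧ (∀ F ∈ K, F.Nonempty) ∧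
    ∀ F ∈ K, ∀ G : Finset S, G.Nonempty → G ⊆ F → G ∈ K

/-- Halved ℓ¹ distance between finitely supported real functions:
`d(α,β) = (1/2) ∑ₛ |α s - β s|`. -/
noncomputable def l1dist {S : Type*} (α β : S →₀ ℝ) : ℝ :=
  (1 / 2) * (α - β).sum fun _ x => |x|

/-- The ℓ¹ geometric realization of a collection `K` of finite subsets of `S`:
finitely supported probability vectors whose support is a face of `K`. -/
def realization {S : Type*} (K : Set (Finset S)) : Set (S →₀ ℝ) :=
  {α | (∀ s, 0 ≤ α s) ∧ (α.sum fun _ x => x) = 1 ∧ α.support ∈ K}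

/-- Distance from a point to a set of finitely supported functions. -/
noncomputable def distToSet {S : Type*} (α : S →₀ ℝ) (X : Set (S →₀ ℝ)) : ℝ :=
  sInf (l1dist α '' X)

/-- One-sided Hausdorff distance between (the realizations of) two complexes. -/
noncomputable def hdelta {S : Type*} (K₁ K₂ : Set (Finset S)) : ℝ :=
  sSup ((fun α => distToSet α (realization K₂)) '' realization K₁)

/-- Hausdorff distance between (the realizations of) two simplicial complexes. -/
noncomputable def hdist {S : Type*} (K₁ K₂ : Set (Finset S)) : ℝ :=
  max (hdelta K₁ K₂) (hdelta K₂ K₁)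

/-- `d(F, K)`: supremum of distances to `|K|₁` over probability vectors
supported exactly on `F`. -/
noncomputable def dFace {S : Type*} (F : Finset S) (K : Set (Finset S)) : ℝ :=
  sSup ((fun α => distToSet α (realization K)) ''
    {α : S →₀ ℝ | (∀ s, 0 ≤ α s) ∧ (α.sum fun _ x => x) = 1 ∧ α.support = F})

/-- The `n`-skeleton of a simplicial complex. -/
def skeleton {S : Type*} (n : ℕ) (K : Set (Finset S)) : Set (Finset S) :=
  {F | F ∈ K ∧ F.card ≤ n + 1}

/-!
If `F` is a face of `K` but not of `L`, the barycenter of `F` is far from `|L|₁`: the support of any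
`β ∈ |L|₁` misses some vertex `s` of `F`, where the barycenter has weight `1 / |F|`. Since both
vectors have total mass `1`, this mass has to be compensated at the other vertices, which cancels
the factor `1 / 2` in the distance. The supremum defining `hdelta` is a genuine one because
probability vectors are at distance at most `1` from each other.
-/

theorem two_nsmul_abs_le_sum_abs_of_sum_eq_zero {ι G : Type*} [AddCommGroup G] [LinearOrder G]
    [IsOrderedAddMonoid G] {T : Finset ι} {f : ι → G} (hf : ∑ t ∈ T, f t = 0) {s : ι}
    (hs : s ∈ T) : 2 • |f s| ≤ ∑ t ∈ T, |f t| := by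
  classical
  have hfs : f s = -∑ t ∈ T.erase s, f t :=
    eq_neg_of_add_eq_zero_left ((Finset.add_sum_erase T f hs).trans hf)
  have hrest : |f s| ≤ ∑ t ∈ T.erase s, |f t| :=
    calc |f s| = |∑ t ∈ T.erase s, f t| := by rw [hfs, abs_neg]
      _ ≤ ∑ t ∈ T.erase s, |f t| := Finset.abs_sum_le_sum_abs _ _
  calc 2 • |f s| = |f s| + |f s| := two_nsmul _
    _ ≤ |f s| + ∑ t ∈ T.erase s, |f t| := by gcongr
    _ = ∑ t ∈ T, |f t| := Finset.add_sum_erase T (fun t => |f t|) hs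

section

variable {S : Type*} {α β : S →₀ ℝ} {F : Finset S} {K L : Set (Finset S)}

theorem l1dist_nonneg (α β : S →₀ ℝ) : 0 ≤ l1dist α β :=
  mul_nonneg (by norm_num) (Finset.sum_nonneg fun _ _ => abs_nonneg _)

theorem abs_sub_le_l1dist (h : (α.sum fun _ x => x) = β.sum fun _ x => x) (s : S) :
    |α s - β s| ≤ l1dist α β := by
  have hsum : ((α - β).sum fun _ x => x) = 0 := by
    rw [Finsupp.sum_sub_index fun _ _ _ => rfl, h, sub_self]
  by_cases hs : s ∈ (α - β).support
  · have htwo : 2 • |α s - β s| ≤ (α - β).sum fun _ x => |x| :=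
      two_nsmul_abs_le_sum_abs_of_sum_eq_zero hsum hs
    rw [nsmul_eq_mul, Nat.cast_ofNat] at htwo
    unfold l1dist
    linarith
  · rw [← Finsupp.sub_apply, Finsupp.notMem_support_iff.mp hs, abs_zero]
    exact l1dist_nonneg α β

theorem l1dist_le_half_sum_add_sum (hα : ∀ s, 0 ≤ α s) (hβ : ∀ s, 0 ≤ β s) :
    l1dist α β ≤ (1 / 2) * ((α.sum fun _ x => x) + β.sum fun _ x => x) := by
  classical
  have habs (s : S) : |(α - β) s| ≤ (α + β) s :=
    calc |α s - β s| ≤ |α s| + |β s| := abs_sub _ _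
      _ = α s + β s := by rw [abs_of_nonneg (hα s), abs_of_nonneg (hβ s)]
  have hsum : ((α - β).sum fun _ x => |x|) ≤ (α + β).sum fun _ x => x := by
    rw [Finsupp.sum_of_support_subset _ Finsupp.support_sub _ fun _ _ => abs_zero,
      Finsupp.sum_of_support_subset _ Finsupp.support_add _ fun _ _ => rfl]
    exact Finset.sum_le_sum fun s _ => habs s
  rw [Finsupp.sum_add_index' (fun _ => rfl) fun _ _ _ => rfl] at hsum
  exact mul_le_mul_of_nonneg_left hsum (by norm_num)

theorem l1dist_le_one_of_mem_realization (hα : α ∈ realization K) (hβ : β ∈ realization L) :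
    l1dist α β ≤ 1 := by
  have h := l1dist_le_half_sum_add_sum hα.1 hβ.1
  rw [hα.2.1, hβ.2.1] at h
  linarith

theorem distToSet_le_l1dist {X : Set (S →₀ ℝ)} (hβ : β ∈ X) : distToSet α X ≤ l1dist α β :=
  csInf_le ⟨0, Set.forall_mem_image.mpr fun γ _ => l1dist_nonneg α γ⟩ (Set.mem_image_of_mem _ hβ)

theorem distToSet_le_hdelta (hα : α ∈ realization K) (hL : (realization L).Nonempty) :
    distToSet α (realization L) ≤ hdelta K L := by
  obtain ⟨β, hβ⟩ := hL
  have hbdd : BddAbove ((fun γ => distToSet γ (realization L)) '' realization K) :=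
    ⟨1, Set.forall_mem_image.mpr fun _ hγ =>
      (distToSet_le_l1dist hβ).trans (l1dist_le_one_of_mem_realization hγ hβ)⟩
  exact le_csSup hbdd (Set.mem_image_of_mem _ hα)

/-- The barycenter of a finite set `F`, i.e. the uniform probability vector on `F`; it is the zero
vector when `F` is empty. -/
noncomputable def barycenter (F : Finset S) : S →₀ ℝ :=
  Finsupp.indicator F fun _ _ => 1 / (F.card : ℝ)

theorem barycenter_apply_of_mem {s : S} (hs : s ∈ F) : barycenter F s = 1 / (F.card : ℝ) :=
  Finsupp.indicator_of_mem hs _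

theorem barycenter_nonneg (F : Finset S) (s : S) : 0 ≤ barycenter F s := by
  classical
  rw [barycenter, Finsupp.indicator_apply]
  split_ifs <;> positivity

theorem support_barycenter (F : Finset S) : (barycenter F).support = F := by
  refine (Finsupp.support_indicator_subset _ _).antisymm fun s hs => ?_
  have hcard : (F.card : ℝ) ≠ 0 := Nat.cast_ne_zero.mpr (Finset.card_ne_zero_of_mem hs)
  exact Finsupp.mem_support_iff.mpr ((barycenter_apply_of_mem hs).trans_ne (one_div_ne_zero hcard))

theorem sum_barycenter (hF : F.Nonempty) : ((barycenter F).sum fun _ x => x) = 1 := by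
  have hcard : (F.card : ℝ) ≠ 0 := Nat.cast_ne_zero.mpr hF.card_ne_zero
  rw [Finsupp.sum, support_barycenter, Finset.sum_congr rfl fun _ => barycenter_apply_of_mem,
    Finset.sum_const, nsmul_eq_mul, mul_one_div_cancel hcard]

theorem barycenter_mem_realization (hF : F.Nonempty) (hFK : F ∈ K) :
    barycenter F ∈ realization K :=
  ⟨barycenter_nonneg F, sum_barycenter hF, (support_barycenter F).symm ▸ hFK⟩

namespace IsSimplicialComplex

theorem realization_nonempty (hL : IsSimplicialComplex L) : (realization L).Nonempty :=
  let ⟨F, hF⟩ := hL.1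
  ⟨barycenter F, barycenter_mem_realization (hL.2.1 F hF) hF⟩

theorem exists_mem_apply_eq_zero (hL : IsSimplicialComplex L) (hF : F.Nonempty) (hFL : F ∉ L)
    (hβ : β ∈ realization L) : ∃ s ∈ F, β s = 0 := by
  have hsub : ¬F ⊆ β.support := fun h => hFL (hL.2.2 _ hβ.2.2 F hF h)
  obtain ⟨s, hsF, hsβ⟩ := Finset.not_subset.mp hsub
  exact ⟨s, hsF, Finsupp.notMem_support_iff.mp hsβ⟩

theorem one_div_card_le_distToSet_barycenter (hL : IsSimplicialComplex L) (hF : F.Nonempty)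
    (hFL : F ∉ L) : 1 / (F.card : ℝ) ≤ distToSet (barycenter F) (realization L) := by
  refine le_csInf (hL.realization_nonempty.image _) (Set.forall_mem_image.mpr fun β hβ => ?_)
  obtain ⟨s, hsF, hsβ⟩ := hL.exists_mem_apply_eq_zero hF hFL hβ
  calc 1 / (F.card : ℝ) = barycenter F s - β s := by
        rw [barycenter_apply_of_mem hsF, hsβ, sub_zero]
    _ ≤ |barycenter F s - β s| := le_abs_self _
    _ ≤ l1dist (barycenter F) β :=
        abs_sub_le_l1dist ((sum_barycenter hF).trans hβ.2.1.symm) s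

theorem one_div_card_le_hdelta (hL : IsSimplicialComplex L) (hF : F.Nonempty) (hFK : F ∈ K)
    (hFL : F ∉ L) : 1 / (F.card : ℝ) ≤ hdelta K L :=
  (hL.one_div_card_le_distToSet_barycenter hF hFL).trans
    (distToSet_le_hdelta (barycenter_mem_realization hF hFK) hL.realization_nonempty)

theorem one_div_add_one_le_hdelta_of_not_subset {n : ℕ} (hL : IsSimplicialComplex L)
    (hK : ∀ F ∈ K, F.Nonempty) (hcard : ∀ F ∈ K, F.card ≤ n + 1) (hKL : ¬K ⊆ L) :
    1 / ((n : ℝ) + 1) ≤ hdelta K L := by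
  obtain ⟨F, hFK, hFL⟩ := Set.not_subset.mp hKL
  have hpos : (0 : ℝ) < F.card := Nat.cast_pos.mpr (hK F hFK).card_pos
  have hle : (F.card : ℝ) ≤ n + 1 := mod_cast hcard F hFK
  exact (one_div_le_one_div_of_le hpos hle).trans
    (hL.one_div_card_le_hdelta (hK F hFK) hFK hFL)

end IsSimplicialComplex

end

/-- Two distinct simplicial complexes of dimension at most `n` are at Hausdorff
distance at least `1/(n+1)`; in particular `𝒮ₙ` is uniformly discrete. -/
theorem stmt13 {S : Type*} (n : ℕ) (K₁ K₂ : Set (Finset S))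
    (h1 : IsSimplicialComplex K₁) (h2 : IsSimplicialComplex K₂)
    (hd1 : ∀ F ∈ K₁, F.card ≤ n + 1) (hd2 : ∀ F ∈ K₂, F.card ≤ n + 1)
    (hne : K₁ ≠ K₂) :
    1 / ((n : ℝ) + 1) ≤ hdist K₁ K₂ := by
  have hsub : ¬K₁ ⊆ K₂ ∨ ¬K₂ ⊆ K₁ := not_and_or.mp fun h => hne (h.1.antisymm h.2)
  rcases hsub with h12 | h21
  · exact (h2.one_div_add_one_le_hdelta_of_not_subset h1.2.1 hd1 h12).trans (le_max_left _ _)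
  · exact (h1.one_div_add_one_le_hdelta_of_not_subset h2.2.1 hd2 h21).trans (le_max_right _ _)
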